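/- Let M be a signal and p ∈ AP. Then M, t ⊨ (p ⇒ p U_{(0,+∞)} ⊤) ∧ (¬p ⇒ (¬p) U_{(0,+∞)} ⊤) holds for every t ∈ ℝ≥0 if and only if for every t ∈ ℝ≥0 there exists ε > 0 such that for all t′ with t < t′ < t + ε, p belongs to the first component of M(t′) if and only if p belongs to the first component of M(t). (That is, the formula characterizes exactly the signals whose p-component changes value only over left-closed/right-open intervals: the truth value of p is constant on a right neighbourhood of every point and agrees there with its value at the point.) -/

import Mathlib

/-! The until operator is strict: a witness `t'` requires `φ` only on the open interval `(t, t')`,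
and the right argument `⊤` requires nothing at `t'`. So `φ U_{(0,+∞)} ⊤` holds at `t` exactly when
`φ` holds eventually along `𝓝[>] t`, and the formula says that whichever of `p`, `¬p` holds at `t`
persists immediately to the right of `t`. The equivalence is thus already pointwise in `t`. -/

open scoped NNReal

namespace TAMC

/-! ### Signals and MITL. -/

/-- A signal: a total function `M : ℝ≥0 → ℘(AP) × ℤ^Int`. -/
abbrev Signal (AP V : Type) := ℝ≥0 → Set AP × (V → ℤ)

/-- An MITL interval `⟨a, b⟩` or `⟨a, ∞)` with natural endpoints `a ≤ b`;
each endpoint may be open or closed (`hi = none` means `∞`). -/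
structure MInterval where
  lo : ℕ
  hi : Option ℕ
  loClosed : Bool
  hiClosed : Bool
  lo_le_hi : ∀ b ∈ hi, lo ≤ b

/-- Membership of a nonnegative real in an MITL interval. -/
def MInterval.mem (I : MInterval) (r : ℝ≥0) : Prop :=
  (if I.loClosed then (I.lo : ℝ≥0) ≤ r else (I.lo : ℝ≥0) < r) ∧
  (match I.hi with
   | none => True
   | some b => if I.hiClosed then r ≤ (b : ℝ≥0) else r < (b : ℝ≥0))

/-- MITL formulas `φ ::= p | n < d | n = d | φ ∧ φ | ¬φ | φ U_I φ`. -/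
inductive MITL (AP V : Type) where
  | ap (p : AP)
  | ltA (n : V) (d : ℤ)
  | eqA (n : V) (d : ℤ)
  | and (f g : MITL AP V)
  | not (f : MITL AP V)
  | untl (I : MInterval) (f g : MITL AP V)

/-- MITL satisfaction over signals. -/
def MITL.sat {AP V : Type} (M : Signal AP V) : ℝ≥0 → MITL AP V → Prop
  | t, .ap p => p ∈ (M t).1
  | t, .ltA n d => (M t).2 n < d
  | t, .eqA n d => (M t).2 n = d
  | t, .and f g => f.sat M t ∧ g.sat M t
  | t, .not f => ¬ f.sat M t
  | t, .untl I f g => ∃ t', t < t' ∧ I.mem (t' - t) ∧ g.sat M t' ∧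
      ∀ t'', t < t'' → t'' < t' → f.sat M t''

/-- `φ ∨ ψ`. -/
def MITL.or {AP V : Type} (f g : MITL AP V) : MITL AP V := .not (.and (.not f) (.not g))

/-- `φ ⇒ ψ` abbreviates `¬(φ ∧ ¬ψ)`. -/
def MITL.imp {AP V : Type} (f g : MITL AP V) : MITL AP V := .not (.and f (.not g))

/-- The interval `(0, +∞)`. -/
def MInterval.zeroInf : MInterval :=
  ⟨0, none, false, false, by intro b hb; exact Nat.zero_le b⟩

/-- `⊤` abbreviates `p ∨ ¬p`. -/
def MITL.topFor {AP V : Type} (p : AP) : MITL AP V := .or (.ap p) (.not (.ap p))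

open Filter Set Topology

theorem nhdsGT_basis_Ioo_add {α : Type*} [AddZeroClass α] [LinearOrder α] [ExistsAddOfLE α]
    [AddLeftStrictMono α] [TopologicalSpace α] [OrderTopology α] [NoMaxOrder α] (a : α) :
    (𝓝[>] a).HasBasis (0 < ·) (fun ε => Ioo a (a + ε)) := by
  have := addLeftMono_of_addLeftStrictMono α
  refine (nhdsGT_basis a).to_hasBasis (fun b hab => ?_) (fun ε hε => ?_)
  · obtain ⟨ε, hε, rfl⟩ := lt_iff_exists_pos_add.mp hab
    exact ⟨ε, hε, Subset.rfl⟩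
  · exact ⟨a + ε, lt_add_of_pos_right a hε, Subset.rfl⟩

theorem MInterval.mem_zeroInf {r : ℝ≥0} : zeroInf.mem r ↔ 0 < r := by
  simp [zeroInf, mem]

namespace MITL

variable {AP V : Type} (M : Signal AP V) (t : ℝ≥0)

theorem sat_not (f : MITL AP V) : (not f).sat M t ↔ ¬ f.sat M t := Iff.rfl

theorem sat_and (f g : MITL AP V) : (and f g).sat M t ↔ f.sat M t ∧ g.sat M t := Iff.rfl

theorem sat_imp (f g : MITL AP V) : (imp f g).sat M t ↔ (f.sat M t → g.sat M t) := by
  simp only [imp, sat_not, sat_and, not_and, not_not]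

theorem sat_topFor (q : AP) : (topFor q).sat M t := by
  simp only [topFor, or, sat_not, sat_and, not_not, not_and_self, not_false_eq_true]

theorem sat_untl_zeroInf (f g : MITL AP V) :
    (untl MInterval.zeroInf f g).sat M t ↔
      ∃ t' > t, g.sat M t' ∧ ∀ s ∈ Ioo t t', f.sat M s := by
  simp only [sat, MInterval.mem_zeroInf, tsub_pos_iff_lt, and_self_left, mem_Ioo, and_imp,
    gt_iff_lt]

theorem sat_untl_zeroInf_topFor (f : MITL AP V) (q : AP) :
    (untl MInterval.zeroInf f (topFor q)).sat M t ↔ ∀ᶠ s in 𝓝[>] t, f.sat M s := by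
  simp only [sat_untl_zeroInf, sat_topFor, true_and, (nhdsGT_basis t).eventually_iff, gt_iff_lt]

end MITL

theorem mitl_left_closed_right_open_characterization_general {AP V : Type}
    (M : Signal AP V) (f : MITL AP V) (q : AP) (t : ℝ≥0) :
    MITL.sat M t
        (MITL.and
          (MITL.imp f (.untl MInterval.zeroInf f (MITL.topFor q)))
          (MITL.imp (.not f) (.untl MInterval.zeroInf (.not f) (MITL.topFor q)))) ↔
      ∃ ε : ℝ≥0, 0 < ε ∧ ∀ t', t < t' → t' < t + ε → (f.sat M t' ↔ f.sat M t) := by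
  calc
    _ ↔ (f.sat M t → ∀ᶠ s in 𝓝[>] t, f.sat M s) ∧
          (¬ f.sat M t → ∀ᶠ s in 𝓝[>] t, ¬ f.sat M s) := by
      simp only [MITL.sat_and, MITL.sat_not, MITL.sat_imp, MITL.sat_untl_zeroInf_topFor]
    _ ↔ ∀ᶠ s in 𝓝[>] t, (f.sat M s ↔ f.sat M t) := by
      by_cases ht : f.sat M t <;>
        simp only [ht, iff_true, iff_false, true_imp_iff, not_true, not_false_iff, false_imp_iff,
          and_true, true_and]
    _ ↔ _ := by
      simp only [(nhdsGT_basis_Ioo_add t).eventually_iff, mem_Ioo, and_imp]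

/-- **Statement 10.** The MITL formula
`(p ⇒ p U_{(0,+∞)} ⊤) ∧ (¬p ⇒ (¬p) U_{(0,+∞)} ⊤)` holds at every time instant of a
signal `M` if and only if the truth value of `p` in `M` is constant on a right
neighbourhood of every point and agrees there with its value at the point. -/
theorem mitl_left_closed_right_open_characterization {AP V : Type}
    (M : Signal AP V) (p : AP) :
    (∀ t : ℝ≥0, MITL.sat M t
        (MITL.and
          (MITL.imp (.ap p) (.untl MInterval.zeroInf (.ap p) (MITL.topFor p)))
          (MITL.imp (.not (.ap p))
            (.untl MInterval.zeroInf (.not (.ap p)) (MITL.topFor p))))) ↔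
    (∀ t : ℝ≥0, ∃ ε : ℝ≥0, 0 < ε ∧ ∀ t', t < t' → t' < t + ε →
        (p ∈ (M t').1 ↔ p ∈ (M t).1)) :=
  forall_congr' fun t => mitl_left_closed_right_open_characterization_general M (.ap p) p t

end TAMC
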